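/- Let E be a real Banach space, F a real Hilbert space, and f : E → F an ε-nearisometry for some ε ≥ 0 with f 0 = 0. Then there is a linear isometry T : E → F such that |P(f x) − T x| ≤ 2ε for all x ∈ E, where P : F → T(E) is the orthogonal projection onto the (closed) range of T. Moreover, if f is surjective, or if E and F have the same finite dimension, then T is surjective and |T x − f x| ≤ 2ε for all x ∈ E. -/

import Mathlib

open Filter Metric Bornology

/-- `f` is an `ε`-nearisometry on `A`. -/
def IsNearisometryOn {E F : Type*} [NormedAddCommGroup E] [NormedAddCommGroup F]
    (f : E → F) (A : Set E) (ε : ℝ) : Prop :=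
  ∀ x ∈ A, ∀ y ∈ A, |‖f x - f y‖ - ‖x - y‖| ≤ ε

/-- The orthogonal projection of `F` onto the (closed) range `T(E)` of a linear isometry
`T : E →ₗᵢ[ℝ] F` from a complete space, as a map `F → F`. -/
noncomputable def projOntoRange {E F : Type*} [NormedAddCommGroup E] [NormedSpace ℝ E]
    [CompleteSpace E] [NormedAddCommGroup F] [InnerProductSpace ℝ F]
    (T : E →ₗᵢ[ℝ] F) (v : F) : F :=
  haveI : CompleteSpace (⊤ : Submodule ℝ E) :=
    completeSpace_coe_iff_isComplete.2 (by simpa using completeSpace_iff_isComplete_univ.1 ‹_›)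
  haveI : CompleteSpace (Submodule.map T.toLinearMap ⊤) := T.completeSpace_map ⊤
  (Submodule.orthogonalProjectionOnto (Submodule.map T.toLinearMap ⊤) v : F)

/-!
The rescalings `c⁻¹ • f (c • x)` of an `ε`-nearisometry are `ε / c`-nearisometries. By the
parallelogram law in `F`, doubling `c` moves them by `O(√(ε / c))`, so they converge along
`c = 2 ^ n`; the limit is an isometry, hence linear by strict convexity of `F`. Polarization gives
`⟪f (c • y), f x⟫ = ⟪T (c • y), T x⟫ + O(c)` with leading constant `2 * ε * ‖y‖`; dividing by `c`
bounds `⟪T y, f x - T x⟫` by `2 * ε * ‖y‖`, which is the bound on the projection. When `f` comes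
within `δ` of every vector, any `u` orthogonal to the range of `T` is close to `f x` for some short
`x`, so the orthogonal complement of the range is a bounded subspace, that is, zero.
-/

open scoped InnerProductSpace Topology

lemma abs_sq_sub_sq_le {a b ε : ℝ} (h : |a - b| ≤ ε) : |a ^ 2 - b ^ 2| ≤ ε * (2 * |b| + ε) := by
  have hadd : |a + b| ≤ 2 * |b| + ε := by
    calc |a + b| = |2 * b + (a - b)| := by ring_nf
      _ ≤ |2 * b| + |a - b| := abs_add_le _ _
      _ ≤ 2 * |b| + ε := by rw [abs_mul, abs_two]; gcongr
  calc |a ^ 2 - b ^ 2| = |a - b| * |a + b| := by rw [← abs_mul]; ring_nf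
    _ ≤ ε * (2 * |b| + ε) := mul_le_mul h hadd (abs_nonneg _) ((abs_nonneg _).trans h)

lemma le_of_mul_self_le_mul {R : Type*} [Semiring R] [LinearOrder R] [IsStrictOrderedRing R]
    {a c : R} (hc : 0 ≤ c) (h : a * a ≤ c * a) : a ≤ c :=
  le_of_not_gt fun hlt ↦ h.not_gt (mul_lt_mul_of_pos_right hlt (hc.trans_lt hlt))

lemma norm_sub_half_smul_sq {F : Type*} [NormedAddCommGroup F] [InnerProductSpace ℝ F] (a b : F) :
    ‖a - (1 / 2 : ℝ) • b‖ ^ 2 = ‖a‖ ^ 2 / 2 + ‖b - a‖ ^ 2 / 2 - ‖b‖ ^ 2 / 4 := by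
  rw [norm_sub_sq_real, norm_sub_sq_real, norm_smul, inner_smul_right, real_inner_comm a b,
    Real.norm_of_nonneg (by norm_num)]
  ring

lemma norm_starProjection_le_of_forall_re_inner_le {𝕜 F : Type*} [RCLike 𝕜]
    [NormedAddCommGroup F] [InnerProductSpace 𝕜 F] {K : Submodule 𝕜 F} [K.HasOrthogonalProjection]
    {v : F} {C : ℝ} (hC : 0 ≤ C) (h : ∀ u ∈ K, RCLike.re ⟪u, v⟫_𝕜 ≤ C * ‖u‖) :
    ‖K.starProjection v‖ ≤ C := by
  set p := K.starProjection v with hp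
  have hpK : p ∈ K := K.starProjection_apply_mem v
  have hinner : ⟪p, v⟫_𝕜 = ⟪p, p⟫_𝕜 := by
    rw [hp, ← K.inner_starProjection_left_eq_right, K.starProjection_eq_self_iff.2 hpK]
  apply le_of_mul_self_le_mul hC
  simpa only [hinner, inner_self_eq_norm_mul_norm] using h p hpK

/-- The blow-down `x ↦ c⁻¹ • f (c • x)` of `f`, whose limit as `c → ∞` describes `f` at infinity. -/
noncomputable def rescale {E F : Type*} [SMul ℝ E] [SMul ℝ F] (f : E → F) (c : ℝ) (x : E) : F :=
  c⁻¹ • f (c • x)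

lemma rescale_apply_zero {E F : Type*} [AddCommGroup E] [Module ℝ E] [AddCommGroup F]
    [Module ℝ F] {f : E → F} (hf0 : f 0 = 0) (c : ℝ) : rescale f c 0 = 0 := by
  rw [rescale, smul_zero, hf0, smul_zero]

lemma rescale_rescale {E F : Type*} [MulAction ℝ E] [MulAction ℝ F] (f : E → F) (c d : ℝ) :
    rescale (rescale f c) d = rescale f (c * d) := by
  ext x
  rw [rescale, rescale, rescale, smul_smul, smul_smul, mul_inv, mul_comm d⁻¹]

namespace IsNearisometryOn

section Normed

variable {E F : Type*} [NormedAddCommGroup E] [NormedAddCommGroup F] {f : E → F} {A : Set E}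
  {ε : ℝ}

lemma nonneg (hf : IsNearisometryOn f A ε) (hA : A.Nonempty) : 0 ≤ ε :=
  let ⟨x, hx⟩ := hA
  (abs_nonneg _).trans (hf x hx x hx)

lemma of_tendsto {ι : Type*} {l : Filter ι} [l.NeBot] {f : ι → E → F} {ε : ι → ℝ} {g : E → F}
    {δ : ℝ} (hf : ∀ i, IsNearisometryOn (f i) A (ε i)) (hε : Tendsto ε l (𝓝 δ))
    (hg : ∀ x ∈ A, Tendsto (fun i ↦ f i x) l (𝓝 (g x))) : IsNearisometryOn g A δ := by
  intro x hx y hy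
  have hlim := (((hg x hx).sub (hg y hy)).norm.sub_const ‖x - y‖).abs
  exact le_of_tendsto_of_tendsto' hlim hε fun i ↦ hf i x hx y hy

lemma isometry (hf : IsNearisometryOn f Set.univ 0) : Isometry f :=
  Isometry.of_dist_eq fun x y ↦ by
    rw [dist_eq_norm, dist_eq_norm]
    exact sub_eq_zero.1 (abs_nonpos_iff.1 (hf x trivial y trivial))

lemma abs_norm_sub_sq_sub_le (hf : IsNearisometryOn f A ε) {x y : E} (hx : x ∈ A) (hy : y ∈ A) :
    |‖f x - f y‖ ^ 2 - ‖x - y‖ ^ 2| ≤ ε * (2 * ‖x - y‖ + ε) := by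
  simpa only [abs_norm] using abs_sq_sub_sq_le (hf x hx y hy)

lemma abs_norm_sq_sub_le (hf : IsNearisometryOn f A ε) (h0 : 0 ∈ A) (hf0 : f 0 = 0) {x : E}
    (hx : x ∈ A) : |‖f x‖ ^ 2 - ‖x‖ ^ 2| ≤ ε * (2 * ‖x‖ + ε) := by
  simpa only [hf0, sub_zero] using hf.abs_norm_sub_sq_sub_le hx h0

lemma rescale_of_pos [NormedSpace ℝ E] [NormedSpace ℝ F] (hf : IsNearisometryOn f A ε) {c : ℝ}
    (hc : 0 < c) : IsNearisometryOn (rescale f c) ((c • ·) ⁻¹' A) (ε / c) := by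
  intro x hx y hy
  have hscale : ‖rescale f c x - rescale f c y‖ - ‖x - y‖ =
      (‖f (c • x) - f (c • y)‖ - ‖c • x - c • y‖) / c := by
    rw [rescale, rescale, ← smul_sub, ← smul_sub, norm_smul, norm_smul, norm_inv,
      Real.norm_of_nonneg hc.le]
    field_simp
  rw [hscale, abs_div, abs_of_pos hc]
  gcongr
  exact hf _ hx _ hy

end Normed

section InnerProduct

variable {E F : Type*} [NormedAddCommGroup E] [NormedSpace ℝ E] [NormedAddCommGroup F]
  [InnerProductSpace ℝ F] {f : E → F} {ε : ℝ}

lemma norm_sub_rescale_two_sq_le (hf : IsNearisometryOn f Set.univ ε) (hf0 : f 0 = 0) (x : E) :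
    ‖f x - rescale f 2 x‖ ^ 2 ≤ ε * (3 * ‖x‖ + 5 / 4 * ε) := by
  have hdouble : (2 : ℝ) • x - x = x := by rw [two_smul, add_sub_cancel_right]
  have hx := abs_le.1 (hf.abs_norm_sq_sub_le trivial hf0 (x := x) trivial)
  have h2x := abs_le.1 (hf.abs_norm_sq_sub_le trivial hf0 (x := (2 : ℝ) • x) trivial)
  have hsub := abs_le.1 (hf.abs_norm_sub_sq_sub_le (x := (2 : ℝ) • x) (y := x) trivial trivial)
  rw [hdouble] at hsub
  rw [norm_smul, Real.norm_ofNat] at h2x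
  rw [rescale, ← one_div, norm_sub_half_smul_sq]
  linarith

lemma dist_rescale_two_pow_succ_le (hf : IsNearisometryOn f Set.univ ε) (hf0 : f 0 = 0) (x : E)
    (n : ℕ) : dist (rescale f (2 ^ n) x) (rescale f (2 ^ (n + 1)) x) ≤
      √(ε * (3 * ‖x‖ + 5 / 4 * ε)) * √(1 / 2) ^ n := by
  have hε : 0 ≤ ε := hf.nonneg Set.univ_nonempty
  have hle : ε / 2 ^ n ≤ ε := div_le_self hε (one_le_pow₀ one_le_two)
  have hstep := norm_sub_rescale_two_sq_le (hf.rescale_of_pos (pow_pos two_pos n))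
    (rescale_apply_zero hf0 _) x
  rw [rescale_rescale, ← pow_succ] at hstep
  refine (sq_le_sq₀ dist_nonneg (by positivity)).1 ?_
  rw [dist_eq_norm]
  calc _ ≤ ε / 2 ^ n * (3 * ‖x‖ + 5 / 4 * (ε / 2 ^ n)) := hstep
    _ ≤ ε / 2 ^ n * (3 * ‖x‖ + 5 / 4 * ε) := by gcongr
    _ = (√(ε * (3 * ‖x‖ + 5 / 4 * ε)) * √(1 / 2) ^ n) ^ 2 := by
      rw [mul_pow, pow_right_comm, Real.sq_sqrt (by positivity), Real.sq_sqrt (by positivity),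
        one_div, inv_pow]
      ring

lemma exists_linearIsometry_tendsto_rescale [CompleteSpace F]
    (hf : IsNearisometryOn f Set.univ ε) (hf0 : f 0 = 0) :
    ∃ T : E →ₗᵢ[ℝ] F,
      ∀ x, Tendsto (fun n : ℕ ↦ rescale f (2 ^ n) x) atTop (𝓝 (T x)) := by
  have hconv (x : E) : ∃ v, Tendsto (fun n : ℕ ↦ rescale f (2 ^ n) x) atTop (𝓝 v) :=
    cauchySeq_tendsto_of_complete <| cauchySeq_of_le_geometric _ _
      (by rw [Real.sqrt_lt' one_pos]; norm_num) (hf.dist_rescale_two_pow_succ_le hf0 x)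
  choose g hg using hconv
  have hε : Tendsto (fun n : ℕ ↦ ε / 2 ^ n) atTop (𝓝 0) :=
    tendsto_const_nhds.div_atTop (tendsto_pow_atTop_atTop_of_one_lt one_lt_two)
  have hnear (n : ℕ) : IsNearisometryOn (rescale f (2 ^ n)) Set.univ (ε / 2 ^ n) :=
    hf.rescale_of_pos (pow_pos two_pos n)
  have hgi : Isometry g := (of_tendsto hnear hε fun x _ ↦ hg x).isometry
  have hg0 : g 0 = 0 :=
    tendsto_nhds_unique (hg 0) (by simp only [rescale_apply_zero hf0, tendsto_const_nhds])
  refine ⟨hgi.affineIsometryOfStrictConvexSpace.linearIsometry, fun x ↦ ?_⟩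
  have hTx : hgi.affineIsometryOfStrictConvexSpace.linearIsometry x = g x := by
    simpa [hg0] using (hgi.affineIsometryOfStrictConvexSpace.map_vadd 0 x).symm
  exact hTx ▸ hg x

lemma abs_inner_sub_inner_le {G : Type*} [NormedAddCommGroup G] [InnerProductSpace ℝ G]
    (hf : IsNearisometryOn f Set.univ ε) (hf0 : f 0 = 0) (T : E →ₗᵢ[ℝ] G) (x y : E) :
    |⟪f x, f y⟫_ℝ - ⟪T x, T y⟫_ℝ| ≤ ε * (2 * ‖x‖ + 2 * ‖y‖ + 3 / 2 * ε) := by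
  have hx := abs_le.1 (hf.abs_norm_sq_sub_le trivial hf0 (x := x) trivial)
  have hy := abs_le.1 (hf.abs_norm_sq_sub_le trivial hf0 (x := y) trivial)
  have hxy := abs_le.1 (hf.abs_norm_sub_sq_sub_le (x := x) (y := y) trivial trivial)
  have htri : ε * ‖x - y‖ ≤ ε * (‖x‖ + ‖y‖) :=
    mul_le_mul_of_nonneg_left (norm_sub_le x y) (hf.nonneg Set.univ_nonempty)
  have hpol := norm_sub_sq_real (f x) (f y)
  have hpolT := norm_sub_sq_real (T x) (T y)
  rw [← map_sub, T.norm_map, T.norm_map, T.norm_map] at hpolT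
  rw [abs_le]
  constructor <;> linarith

lemma abs_inner_map_sub_le (hf : IsNearisometryOn f Set.univ ε) (hf0 : f 0 = 0)
    {T : E →ₗᵢ[ℝ] F} {ι : Type*} {l : Filter ι} [l.NeBot] {c : ι → ℝ} (hc : Tendsto c l atTop)
    {y : E} (hT : Tendsto (fun i ↦ rescale f (c i) y) l (𝓝 (T y))) (x : E) :
    |⟪T y, f x - T x⟫_ℝ| ≤ 2 * ε * ‖y‖ := by
  have hlim : Tendsto (fun i ↦ |⟪rescale f (c i) y, f x⟫_ℝ - ⟪T y, T x⟫_ℝ|) l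
      (𝓝 |⟪T y, f x - T x⟫_ℝ|) := by
    rw [inner_sub_right]
    exact ((hT.inner tendsto_const_nhds).sub_const _).abs
  have hbound : Tendsto (fun i ↦ 2 * ε * ‖y‖ + ε * (2 * ‖x‖ + 3 / 2 * ε) / c i) l
      (𝓝 (2 * ε * ‖y‖)) := by
    simpa only [add_zero] using (tendsto_const_nhds.div_atTop hc).const_add (2 * ε * ‖y‖)
  refine le_of_tendsto_of_tendsto hlim hbound ?_
  filter_upwards [hc.eventually_gt_atTop 0] with i hi
  have hscale : ⟪rescale f (c i) y, f x⟫_ℝ - ⟪T y, T x⟫_ℝ =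
      (⟪f (c i • y), f x⟫_ℝ - ⟪T (c i • y), T x⟫_ℝ) / c i := by
    rw [rescale, map_smul, real_inner_smul_left, real_inner_smul_left]
    field_simp
  rw [hscale, abs_div, abs_of_pos hi, div_le_iff₀ hi]
  calc _ ≤ ε * (2 * ‖c i • y‖ + 2 * ‖x‖ + 3 / 2 * ε) := hf.abs_inner_sub_inner_le hf0 T _ _
    _ = (2 * ε * ‖y‖ + ε * (2 * ‖x‖ + 3 / 2 * ε) / c i) * c i := by
      rw [norm_smul, Real.norm_of_nonneg hi.le]
      field_simp
      ring

lemma norm_le_of_mem_orthogonal_range (hf : IsNearisometryOn f Set.univ ε) (hf0 : f 0 = 0)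
    {T : E →ₗᵢ[ℝ] F} {x : E} {C δ : ℝ} (hC : 0 ≤ C) (hT : |⟪T x, f x - T x⟫_ℝ| ≤ C * ‖x‖) {u : F}
    (hu : u ∈ (LinearMap.range T.toLinearMap)ᗮ) (hxu : ‖f x - u‖ ≤ δ) :
    ‖u‖ ≤ C + ε + 2 * δ := by
  have horth : ⟪T x, u⟫_ℝ = 0 := hu (T x) ⟨x, rfl⟩
  have hself : ⟪T x, T x⟫_ℝ = ‖x‖ * ‖x‖ := by rw [real_inner_self_eq_norm_mul_norm, T.norm_map]
  have hfx : ⟪T x, f x - u⟫_ℝ ≤ ‖x‖ * δ := by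
    calc _ ≤ ‖T x‖ * ‖f x - u‖ := real_inner_le_norm _ _
      _ ≤ ‖x‖ * δ := by rw [T.norm_map]; gcongr
  have hx : ‖x‖ ≤ C + δ := by
    refine le_of_mul_self_le_mul (add_nonneg hC ((norm_nonneg _).trans hxu)) ?_
    have hlow := (abs_le.1 hT).1
    rw [inner_sub_right] at hlow hfx
    linarith
  have hnorm := (abs_le.1 (hf x trivial 0 trivial)).2
  rw [hf0, sub_zero, sub_zero] at hnorm
  linarith [norm_le_norm_add_norm_sub' u (f x), norm_sub_rev u (f x)]

lemma denseRange_of_abs_inner_map_sub_le [CompleteSpace F] (hf : IsNearisometryOn f Set.univ ε)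
    (hf0 : f 0 = 0) {T : E →ₗᵢ[ℝ] F} {C δ : ℝ} (hC : 0 ≤ C)
    (hT : ∀ x, |⟪T x, f x - T x⟫_ℝ| ≤ C * ‖x‖) (hδ : ∀ v, ∃ x, ‖f x - v‖ ≤ δ) :
    DenseRange T := by
  have horth : (LinearMap.range T.toLinearMap)ᗮ = ⊥ := by
    by_contra hne
    have : Nontrivial (LinearMap.range T.toLinearMap)ᗮ := Submodule.nontrivial_iff_ne_bot.2 hne
    obtain ⟨⟨u, hu⟩, hlt⟩ :=
      NormedSpace.exists_lt_norm ℝ (LinearMap.range T.toLinearMap)ᗮ (C + ε + 2 * δ)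
    obtain ⟨x, hx⟩ := hδ u
    exact hlt.not_ge (hf.norm_le_of_mem_orthogonal_range hf0 hC (hT x) hu hx)
  exact Submodule.dense_iff_topologicalClosure_eq_top.2
    (Submodule.topologicalClosure_eq_top_iff.2 horth)

end InnerProduct

end IsNearisometryOn

lemma surjective_of_isometry_of_denseRange {X Y : Type*} [EMetricSpace X] [CompleteSpace X]
    [EMetricSpace Y] {g : X → Y} (hg : Isometry g) (hd : DenseRange g) : Function.Surjective g := by
  rw [← Set.range_eq_univ, ← hg.isClosedEmbedding.isClosed_range.closure_eq, hd.closure_range]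

section LinearIsometry

variable {E F : Type*} [NormedAddCommGroup E] [NormedSpace ℝ E] [NormedAddCommGroup F]
  [InnerProductSpace ℝ F]

lemma projOntoRange_eq_starProjection [CompleteSpace E] (T : E →ₗᵢ[ℝ] F) {K : Submodule ℝ F}
    [K.HasOrthogonalProjection] (hK : K = LinearMap.range T.toLinearMap) (v : F) :
    projOntoRange T v = K.starProjection v := by
  rw [LinearMap.range_eq_map] at hK
  subst hK
  rfl

lemma topologicalClosure_range_linearIsometry [CompleteSpace E] (T : E →ₗᵢ[ℝ] F) :
    (LinearMap.range T.toLinearMap).topologicalClosure = LinearMap.range T.toLinearMap :=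
  IsClosed.submodule_topologicalClosure_eq T.isometry.isClosedEmbedding.isClosed_range

lemma projOntoRange_eq_starProjection_closure_range [CompleteSpace E] [CompleteSpace F]
    (T : E →ₗᵢ[ℝ] F) (v : F) : projOntoRange T v =
      (LinearMap.range T.toLinearMap).topologicalClosure.starProjection v :=
  projOntoRange_eq_starProjection T (topologicalClosure_range_linearIsometry T) v

lemma norm_starProjection_closure_range_sub_le [CompleteSpace F] (T : E →ₗᵢ[ℝ] F) {v : F} {x : E}
    {C : ℝ} (hC : 0 ≤ C) (h : ∀ y, |⟪T y, v - T x⟫_ℝ| ≤ C * ‖y‖) :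
    ‖(LinearMap.range T.toLinearMap).topologicalClosure.starProjection v - T x‖ ≤ C := by
  set K := (LinearMap.range T.toLinearMap).topologicalClosure
  have hTx : K.starProjection (T x) = T x :=
    K.starProjection_eq_self_iff.2 (Submodule.le_topologicalClosure _ ⟨x, rfl⟩)
  rw [← hTx, ← map_sub]
  refine norm_starProjection_le_of_forall_re_inner_le hC fun u hu ↦ ?_
  refine closure_minimal (t := {u | ⟪u, v - T x⟫_ℝ ≤ C * ‖u‖}) ?_
    (isClosed_le (by fun_prop) (by fun_prop)) hu
  rintro _ ⟨y, rfl⟩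
  simpa only [Set.mem_ofPred_eq, LinearIsometry.coe_toLinearMap, T.norm_map] using
    (le_abs_self _).trans (h y)

end LinearIsometry

theorem hyersUlam_general {E F : Type*}
    [NormedAddCommGroup E] [NormedSpace ℝ E]
    [NormedAddCommGroup F] [InnerProductSpace ℝ F] [CompleteSpace F]
    (f : E → F) (ε : ℝ) (hf : IsNearisometryOn f Set.univ ε) (hf0 : f 0 = 0) :
    ∃ T : E →ₗᵢ[ℝ] F,
      (∀ x : E, ‖(LinearMap.range T.toLinearMap).topologicalClosure.starProjection (f x) - T x‖ ≤
        2 * ε) ∧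
      (((∃ δ : ℝ, ∀ v : F, ∃ x : E, ‖f x - v‖ ≤ δ) ∨
          (FiniteDimensional ℝ E ∧ FiniteDimensional ℝ F ∧
            Module.finrank ℝ E = Module.finrank ℝ F)) →
        DenseRange T ∧ ∀ x : E, ‖T x - f x‖ ≤ 2 * ε) := by
  have hε : 0 ≤ ε := hf.nonneg Set.univ_nonempty
  obtain ⟨T, hT⟩ := hf.exists_linearIsometry_tendsto_rescale hf0
  have hinner (x y : E) : |⟪T y, f x - T x⟫_ℝ| ≤ 2 * ε * ‖y‖ :=
    hf.abs_inner_map_sub_le hf0 (tendsto_pow_atTop_atTop_of_one_lt one_lt_two) (hT y) x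
  have hproj (x : E) := norm_starProjection_closure_range_sub_le T (by positivity) (hinner x)
  refine ⟨T, hproj, fun h ↦ ?_⟩
  have hdense : DenseRange T := by
    rcases h with ⟨δ, hδ⟩ | ⟨_, _, hrank⟩
    · exact hf.denseRange_of_abs_inner_map_sub_le hf0 (by positivity) (fun x ↦ hinner x x) hδ
    · exact ((LinearMap.injective_iff_surjective_of_finrank_eq_finrank
        (f := T.toLinearMap) hrank).1 T.injective).denseRange
  have htop : (LinearMap.range T.toLinearMap).topologicalClosure = ⊤ :=
    Submodule.dense_iff_topologicalClosure_eq_top.1 hdense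
  refine ⟨hdense, fun x ↦ ?_⟩
  simpa only [htop, Submodule.starProjection_top, ContinuousLinearMap.id_apply, norm_sub_rev]
    using hproj x

/-- Theorem 5.1 (Hyers–Ulam): if `E` is a Banach space, `F` a Hilbert space, and
`f : E → F` an `ε`-nearisometry with `f 0 = 0`, then there is a linear isometry
`T : E → F` with `|P (f x) - T x| ≤ 2ε` for all `x`, where `P : F → T(E)` is the
orthogonal projection.  Moreover, if `f` is surjective or `E` and `F` have the same
finite dimension, then `T` is surjective and `|T x - f x| ≤ 2ε` for all `x`. -/
theorem hyersUlam {E F : Type*}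
    [NormedAddCommGroup E] [NormedSpace ℝ E] [CompleteSpace E]
    [NormedAddCommGroup F] [InnerProductSpace ℝ F] [CompleteSpace F]
    (f : E → F) (ε : ℝ) (hε : 0 ≤ ε)
    (hf : IsNearisometryOn f Set.univ ε) (hf0 : f 0 = 0) :
    ∃ T : E →ₗᵢ[ℝ] F,
      (∀ x : E, ‖projOntoRange T (f x) - T x‖ ≤ 2 * ε) ∧
      ((Function.Surjective f ∨
          (FiniteDimensional ℝ E ∧ FiniteDimensional ℝ F ∧
            Module.finrank ℝ E = Module.finrank ℝ F)) →
        Function.Surjective T ∧ ∀ x : E, ‖T x - f x‖ ≤ 2 * ε) := by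
  obtain ⟨T, hproj, hdense⟩ := hyersUlam_general f ε hf hf0
  exact ⟨T, fun x ↦ projOntoRange_eq_starProjection_closure_range T (f x) ▸ hproj x, fun h ↦
    (hdense (h.imp_left fun hs ↦ ⟨0, fun v ↦ (hs v).imp fun x hx ↦ by simp [hx]⟩)).imp_left
      (surjective_of_isometry_of_denseRange T.isometry)⟩
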